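/- arXiv:1109.0898 — 2 statements merged into one kernel-verified Lean document; each statement's English description precedes it below -/
import Mathlib

section
/- (Two-sided alternative, upper bounds.) Assume N, M, n, m → ∞, p = n/N → 0, q = m/M → 0, and log(1/p)/m + log(1/q)/n → 0. If a²√(n m p q) → ∞ or liminf a²√(nm)/(2√(n log(1/p) + m log(1/q))) > 1, then the chi-square test ψ^z = max{ψ^z_lin, ψ^z_max} — with H → ∞ such that H < c·(a²/2)√(n m p q) for some fixed c ∈ (0,1), and T_{nm} = √((2+δ) log G_{nm}) for some sufficiently small δ > 0 — satisfies γ^±_{nm,a}(ψ^z) → 0. -/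
/-!
For `Y ∼ N(s, 1)` the centred square `Y² - 1 - s²` has a sub-gamma right tail, with variance factor
`2 (1 + 2 s²)` and scale `2`, and a sub-Gaussian left tail with the same variance factor. Both
bounds add up over independent cells and yield the Laurent–Massart and Birgé deviation
inequalities for (noncentral) chi-square variables, which control three probabilities.

* The global statistic `z_lin` exceeds `H` under `P_0` with probability at most `exp (-H / 4)`.
* A union bound over the `G` submatrices is affordable if each of them is tested at level
  `exp (-(1 + δ/4) log G)`. The corresponding deviation has a Gaussian term
  `√(2 (1 + δ/4) log G)` and a linear term of order `log G / √(nm)`. The latter is negligible,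
  since `log G = o(nm)`, and the sum stays below `T = √((2 + δ) log G)`.
* Under an alternative `S` the statistic `z_lin` has mean `Q / √(2NM)` with
  `Q = ∑ s_{ij}² ≥ a² nm`. The bound on `H` says that the threshold is at most a fraction
  `1 - ρ < 1` of this mean, so that `z_lin` misses `S` with probability at most
  `exp (-ρ² H / 10)`, uniformly in `S`.
-/

open MeasureTheory ProbabilityTheory Filter Topology
open scoped Classical

noncomputable section

/-- Standard normal cumulative distribution function `Φ`. -/
def Phi (x : ℝ) : ℝ := ((gaussianReal 0 1) (Set.Iic x)).toReal

/-- Law `P_S` of the `N × M` observation matrix `Y_{ij} = s_{ij} + ξ_{ij}`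
with i.i.d. standard Gaussian noise. -/
def matLaw (N M : ℕ) (S : Fin N → Fin M → ℝ) : Measure ((Fin N × Fin M) → ℝ) :=
  Measure.pi fun ij => gaussianReal (S ij.1 ij.2) 1

/-- First-type error `α(ψ) = E_0 ψ`. -/
def alphaErr (N M : ℕ) (ψ : ((Fin N × Fin M) → ℝ) → ℝ) : ℝ :=
  ∫ y, ψ y ∂(matLaw N M fun _ _ => 0)

/-- Second-type error `β(ψ, S) = E_S (1 - ψ)`. -/
def betaErr (N M : ℕ) (S : Fin N → Fin M → ℝ) (ψ : ((Fin N × Fin M) → ℝ) → ℝ) : ℝ :=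
  ∫ y, (1 - ψ y) ∂(matLaw N M S)

/-- The alternative class `S_{nm,a}`: some `n × m` submatrix `C = A × B` has all entries `≥ a`,
and all other entries vanish. -/
def SAlt (N M n m : ℕ) (a : ℝ) : Set (Fin N → Fin M → ℝ) :=
  {S | ∃ (A : Finset (Fin N)) (B : Finset (Fin M)), A.card = n ∧ B.card = m ∧
      (∀ i j, i ∈ A → j ∈ B → a ≤ S i j) ∧ ∀ i j, ¬(i ∈ A ∧ j ∈ B) → S i j = 0}

/-- Maximal second-type error `β_{nm,a}(ψ)`. -/
def betaMax (N M n m : ℕ) (a : ℝ) (ψ : ((Fin N × Fin M) → ℝ) → ℝ) : ℝ :=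
  sSup ((fun S => betaErr N M S ψ) '' SAlt N M n m a)

/-- Linear statistic `t_lin`. -/
def tlin (N M : ℕ) (y : (Fin N × Fin M) → ℝ) : ℝ :=
  (∑ ij : Fin N × Fin M, y ij) / Real.sqrt ((N : ℝ) * M)

/-- Linear test `ψ^lin_H = 1{t_lin > H}`. -/
def psiLin (N M : ℕ) (H : ℝ) (y : (Fin N × Fin M) → ℝ) : ℝ :=
  if H < tlin N M y then 1 else 0

/-- Normalized submatrix sum `Y_C` for `C = A × B`. -/
def YC (N M : ℕ) (y : (Fin N × Fin M) → ℝ)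
    (A : Finset (Fin N)) (B : Finset (Fin M)) : ℝ :=
  (∑ i ∈ A, ∑ j ∈ B, y (i, j)) / Real.sqrt ((A.card : ℝ) * B.card)

/-- Scan statistic `t_max = max_{C ∈ C_{nm}} Y_C`. -/
def tmax (N M n m : ℕ) (y : (Fin N × Fin M) → ℝ) : ℝ :=
  sSup {v | ∃ (A : Finset (Fin N)) (B : Finset (Fin M)),
    A.card = n ∧ B.card = m ∧ v = YC N M y A B}

/-- `G_{nm} = C(N,n) · C(M,m)`, the number of `n × m` submatrices. -/
def Gnm (N M n m : ℕ) : ℕ := N.choose n * M.choose m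

/-- Threshold `T_{nm} = √(2 log G_{nm})`. -/
def Tnm (N M n m : ℕ) : ℝ := Real.sqrt (2 * Real.log (Gnm N M n m : ℝ))

/-- Scan test `ψ^max_T = 1{t_max > T}`. -/
def psiMax (N M n m : ℕ) (T : ℝ) (y : (Fin N × Fin M) → ℝ) : ℝ :=
  if T < tmax N M n m y then 1 else 0

/-- Two-sided alternative class `S^±_{nm,a}`. -/
def SAltTS (N M n m : ℕ) (a : ℝ) : Set (Fin N → Fin M → ℝ) :=
  {S | ∃ (A : Finset (Fin N)) (B : Finset (Fin M)), A.card = n ∧ B.card = m ∧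
      (∀ i j, i ∈ A → j ∈ B → a ≤ |S i j|) ∧ ∀ i j, ¬(i ∈ A ∧ j ∈ B) → S i j = 0}

/-- Maximal second-type error over the two-sided alternative. -/
def betaMaxTS (N M n m : ℕ) (a : ℝ) (ψ : ((Fin N × Fin M) → ℝ) → ℝ) : ℝ :=
  sSup ((fun S => betaErr N M S ψ) '' SAltTS N M n m a)

/-- Linear chi-square statistic `z_lin`. -/
def zlin (N M : ℕ) (y : (Fin N × Fin M) → ℝ) : ℝ :=
  (∑ ij : Fin N × Fin M, ((y ij) ^ 2 - 1)) / Real.sqrt (2 * (N : ℝ) * M)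

/-- Normalized chi-square submatrix statistic `Z_C`. -/
def ZCsq (N M : ℕ) (y : (Fin N × Fin M) → ℝ)
    (A : Finset (Fin N)) (B : Finset (Fin M)) : ℝ :=
  (∑ i ∈ A, ∑ j ∈ B, ((y (i, j)) ^ 2 - 1)) /
    Real.sqrt (2 * (A.card : ℝ) * B.card)

/-- Chi-square scan statistic `z_max`. -/
def zmax (N M n m : ℕ) (y : (Fin N × Fin M) → ℝ) : ℝ :=
  sSup {v | ∃ (A : Finset (Fin N)) (B : Finset (Fin M)),
    A.card = n ∧ B.card = m ∧ v = ZCsq N M y A B}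

/-- Chi-square test `ψ^z = max{ψ^z_lin, ψ^z_max}`. -/
def psiZsq (N M n m : ℕ) (H T : ℝ) (y : (Fin N × Fin M) → ℝ) : ℝ :=
  max (if H < zlin N M y then 1 else 0) (if T < zmax N M n m y then 1 else 0)

open scoped NNReal

/-- A real random variable `X` is sub-gamma on the right tail, with variance factor `v` and scale
parameter `c`, if its logarithmic moment generating function at `t ∈ [0, 1/c)` is at most
`v t² / (2 (1 - c t))`. The case `c = 0` is a one-sided sub-Gaussian bound. -/
structure IsSubGamma {Ω : Type*} [MeasurableSpace Ω] (X : Ω → ℝ) (v c : ℝ) (μ : Measure Ω) :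
    Prop where
  integrable_exp_mul : ∀ t, 0 ≤ t → c * t < 1 → Integrable (fun ω => Real.exp (t * X ω)) μ
  mgf_le : ∀ t, 0 ≤ t → c * t < 1 → mgf X μ t ≤ Real.exp (v * t ^ 2 / (2 * (1 - c * t)))

namespace IsSubGamma

variable {Ω Ω' ι : Type*} [MeasurableSpace Ω] [MeasurableSpace Ω'] {μ : Measure Ω} {ν : Measure Ω'}
  {v c : ℝ}

lemma comp_measurePreserving {X : Ω' → ℝ} {Y : Ω → Ω'} (hX : IsSubGamma X v c ν)
    (hY : MeasurePreserving Y μ ν) : IsSubGamma (X ∘ Y) v c μ where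
  integrable_exp_mul t ht hct := hY.integrable_comp_of_integrable (hX.integrable_exp_mul t ht hct)
  mgf_le t ht hct := by
    have hint := hX.integrable_exp_mul t ht hct
    rw [← hY.map_eq] at hint
    rw [← mgf_map hY.measurable.aemeasurable hint.aestronglyMeasurable, hY.map_eq]
    exact hX.mgf_le t ht hct

lemma sum {X : ι → Ω → ℝ} {v : ι → ℝ} {s : Finset ι}
    (hind : iIndepFun X μ) (hmeas : ∀ i, Measurable (X i))
    (hX : ∀ i ∈ s, IsSubGamma (X i) (v i) c μ) :
    IsSubGamma (∑ i ∈ s, X i) (∑ i ∈ s, v i) c μ where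
  integrable_exp_mul t ht hct :=
    have := hind.isProbabilityMeasure
    hind.integrable_exp_mul_sum hmeas fun i hi => (hX i hi).integrable_exp_mul t ht hct
  mgf_le t ht hct := by
    rw [hind.mgf_sum hmeas, Finset.sum_mul, Finset.sum_div, Real.exp_sum]
    exact Finset.prod_le_prod (fun _ _ => mgf_nonneg) fun i hi => (hX i hi).mgf_le t ht hct

lemma measureReal_ge_le [IsFiniteMeasure μ] {X : Ω → ℝ} (hX : IsSubGamma X v c μ) (hv : 0 < v)
    (hc : 0 ≤ c) {x : ℝ} (hx : 0 ≤ x) :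
    μ.real {ω | √(2 * v * x) + c * x ≤ X ω} ≤ Real.exp (-x) := by
  set w := √(2 * x / v) with hw
  have hw0 : 0 ≤ w := Real.sqrt_nonneg _
  have hwx : x = v * w ^ 2 / 2 := by
    rw [hw, Real.sq_sqrt (by positivity)]
    field_simp
  have hsqrt : √(2 * v * x) = v * w := by
    rw [Real.sqrt_eq_iff_mul_self_eq (by positivity) (by positivity), hwx]
    ring
  have hden : 0 < 1 + c * w := by positivity
  -- the minimizer of `v t² / (2 (1 - c t)) - t (√(2 v x) + c x)`
  set t := w / (1 + c * w) with ht
  have hct : 1 - c * t = (1 + c * w)⁻¹ := by rw [ht]; field_simp; ring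
  have hct1 : c * t < 1 := by linarith [inv_pos.2 hden]
  have ht0 : 0 ≤ t := by positivity
  calc μ.real {ω | √(2 * v * x) + c * x ≤ X ω}
      ≤ Real.exp (-t * (√(2 * v * x) + c * x)) * mgf X μ t :=
        measure_ge_le_exp_mul_mgf _ ht0 (hX.integrable_exp_mul t ht0 hct1)
    _ ≤ Real.exp (-t * (√(2 * v * x) + c * x)) * Real.exp (v * t ^ 2 / (2 * (1 - c * t))) := by
        gcongr
        exact hX.mgf_le t ht0 hct1
    _ = Real.exp (-x) := by
        rw [← Real.exp_add, hct, hsqrt, hwx, ht]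
        congr 1
        field_simp
        ring

end IsSubGamma

/-! ### Squares of Gaussian variables -/

lemma integral_exp_mul_sq_gaussianReal (s : ℝ) (v : ℝ≥0) {t : ℝ} (ht : 2 * v * t < 1) :
    ∫ y, Real.exp (t * y ^ 2) ∂gaussianReal s v =
      Real.exp (t * s ^ 2 / (1 - 2 * v * t)) / √(1 - 2 * v * t) := by
  rcases eq_or_ne v 0 with rfl | hv
  · simp
  have hk : 0 < 1 - 2 * v * t := by linarith
  set k : ℝ := 1 - 2 * v * t with hkdef
  have hv' : (v : ℝ) ≠ 0 := NNReal.coe_ne_zero.2 hv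
  let w : ℝ≥0 := v / ⟨k, hk.le⟩
  have hw : (w : ℝ) = v / k := rfl
  have hw0 : w ≠ 0 := by rw [← NNReal.coe_ne_zero, hw]; positivity
  -- completing the square: the tilted density is a multiple of that of `N(s/k, v/k)`
  have key (y : ℝ) : gaussianPDFReal s v y • Real.exp (t * y ^ 2) =
      Real.exp (t * s ^ 2 / k) / √k * gaussianPDFReal (s / k) w y := by
    have hexp : -(y - s) ^ 2 / (2 * v) + t * y ^ 2 =
        t * s ^ 2 / k + -(y - s / k) ^ 2 / (2 * (v / k)) := by
      have htk : t = (1 - k) / (2 * v) := by rw [hkdef]; field_simp; ring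
      rw [htk]
      field_simp
      ring
    have hsqrt : √(2 * Real.pi * v) = √k * √(2 * Real.pi * (v / k)) := by
      rw [← Real.sqrt_mul hk.le]
      congr 1
      field_simp
    rw [gaussianPDFReal, gaussianPDFReal, hw, smul_eq_mul, mul_assoc, ← Real.exp_add, hexp,
      Real.exp_add, hsqrt]
    field_simp
  simp_rw [integral_gaussianReal_eq_integral_smul hv, key]
  rw [integral_const_mul, integral_gaussianPDFReal_eq_one _ hw0, mul_one]

lemma integrable_exp_mul_sq_sub_gaussianReal (s : ℝ) (v : ℝ≥0) (b : ℝ) {t : ℝ}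
    (ht : 2 * v * t < 1) :
    Integrable (fun y => Real.exp (t * (y ^ 2 - b))) (gaussianReal s v) := by
  have hint : Integrable (fun y => Real.exp (t * y ^ 2)) (gaussianReal s v) := by
    have : 0 < 1 - 2 * v * t := by linarith
    refine Integrable.of_integral_ne_zero ?_
    rw [integral_exp_mul_sq_gaussianReal s v ht]
    positivity
  simpa only [mul_sub, Real.exp_sub] using hint.div_const (Real.exp (t * b))

lemma mgf_sq_sub_gaussianReal (s : ℝ) (v : ℝ≥0) (b : ℝ) {t : ℝ} (ht : 2 * v * t < 1) :
    mgf (fun y => y ^ 2 - b) (gaussianReal s v) t =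
      Real.exp (t * s ^ 2 / (1 - 2 * v * t) - Real.log (1 - 2 * v * t) / 2 - t * b) := by
  have hk : 0 < 1 - 2 * v * t := by linarith
  simp_rw [sub_eq_add_neg _ b]
  rw [mgf_add_const, mgf, integral_exp_mul_sq_gaussianReal s v ht, Real.exp_sub, Real.exp_sub,
    ← Real.log_sqrt hk.le, Real.exp_log (by positivity), mul_neg, Real.exp_neg]
  rfl

lemma neg_log_one_sub_le {x : ℝ} (hx0 : 0 ≤ x) (hx1 : x < 1) :
    -Real.log (1 - x) ≤ x + x ^ 2 / (2 * (1 - x)) := by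
  have hk : 0 < 1 - x := by linarith
  have hsinh := Real.self_le_sinh_iff.2 (Real.log_nonneg (one_le_inv_iff₀.2 ⟨hk, by linarith⟩))
  rw [Real.sinh_log (inv_pos.2 hk), Real.log_inv] at hsinh
  refine hsinh.trans_eq ?_
  field_simp
  ring

lemma neg_log_one_add_le {x : ℝ} (hx : 0 ≤ x) : -Real.log (1 + x) ≤ -x + x ^ 2 / 2 := by
  have hlog := Real.le_log_one_add_of_nonneg hx
  have hdiff : 2 * x / (x + 2) - (x - x ^ 2 / 2) = x ^ 3 / (2 * (x + 2)) := by
    field_simp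
    ring
  have : 0 ≤ x ^ 3 / (2 * (x + 2)) := by positivity
  linarith

lemma isSubGamma_sq_gaussianReal (s : ℝ) (v : ℝ≥0) :
    IsSubGamma (fun y => y ^ 2 - (v + s ^ 2)) (2 * v * (v + 2 * s ^ 2)) (2 * v)
      (gaussianReal s v) where
  integrable_exp_mul _ _ ht := integrable_exp_mul_sq_sub_gaussianReal s v _ ht
  mgf_le t ht0 ht := by
    rw [mgf_sq_sub_gaussianReal s v _ ht]
    gcongr
    have hk : 1 - 2 * v * t ≠ 0 := by linarith
    have hlog := neg_log_one_sub_le (x := 2 * v * t) (by positivity) ht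
    calc _ ≤ t * s ^ 2 / (1 - 2 * v * t) +
          (2 * v * t + (2 * v * t) ^ 2 / (2 * (1 - 2 * v * t))) / 2 - t * (v + s ^ 2) := by linarith
      _ = _ := by simp only [← div_div]; linear_combination t * s ^ 2 * mul_inv_cancel₀ hk

lemma isSubGamma_neg_sq_gaussianReal (s : ℝ) (v : ℝ≥0) :
    IsSubGamma (fun y => -(y ^ 2 - (v + s ^ 2))) (2 * v * (v + 2 * s ^ 2)) 0
      (gaussianReal s v) where
  integrable_exp_mul t ht _ := by
    have hvt : 0 ≤ v * t := by positivity
    simpa only [mul_neg, neg_mul] using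
      integrable_exp_mul_sq_sub_gaussianReal s v (v + s ^ 2) (t := -t) (by linarith)
  mgf_le t ht _ := by
    have hvt : 0 ≤ v * t := by positivity
    have hlog := neg_log_one_add_le (x := 2 * v * t) (by positivity)
    have hsq : -t * s ^ 2 / (1 + 2 * v * t) ≤ -t * s ^ 2 + 2 * v * t ^ 2 * s ^ 2 := by
      rw [div_le_iff₀ (by linarith)]
      have : 0 ≤ 4 * (v * t) ^ 2 * (t * s ^ 2) := by positivity
      linarith
    change mgf (-fun y : ℝ => y ^ 2 - (v + s ^ 2)) _ _ ≤ _
    rw [mgf_neg, mgf_sq_sub_gaussianReal s v _ (by linarith),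
      show 1 - 2 * v * -t = 1 + 2 * v * t by ring, zero_mul, sub_zero, mul_one]
    gcongr
    linarith

lemma isSubGamma_sum_sq {Ω ι : Type*} [MeasurableSpace Ω] {P : Measure Ω} {Y : ι → Ω → ℝ}
    {s : ι → ℝ} {v : ℝ≥0} (hind : iIndepFun Y P)
    (hY : ∀ i, MeasurePreserving (Y i) P (gaussianReal (s i) v)) (C : Finset ι) :
    IsSubGamma (∑ i ∈ C, fun ω => Y i ω ^ 2 - (v + s i ^ 2))
      (∑ i ∈ C, 2 * v * (v + 2 * s i ^ 2)) (2 * v) P :=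
  .sum (hind.comp (fun i y => y ^ 2 - (v + s i ^ 2)) fun _ => by fun_prop)
    (fun i => ((hY i).measurable.pow_const 2).sub_const _)
    fun i _ => (isSubGamma_sq_gaussianReal (s i) v).comp_measurePreserving (hY i)

lemma isSubGamma_sum_neg_sq {Ω ι : Type*} [MeasurableSpace Ω] {P : Measure Ω} {Y : ι → Ω → ℝ}
    {s : ι → ℝ} {v : ℝ≥0} (hind : iIndepFun Y P)
    (hY : ∀ i, MeasurePreserving (Y i) P (gaussianReal (s i) v)) (C : Finset ι) :
    IsSubGamma (∑ i ∈ C, fun ω => -(Y i ω ^ 2 - (v + s i ^ 2)))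
      (∑ i ∈ C, 2 * v * (v + 2 * s i ^ 2)) 0 P :=
  .sum (hind.comp (fun i y => -(y ^ 2 - (v + s i ^ 2))) fun _ => by fun_prop)
    (fun i => (((hY i).measurable.pow_const 2).sub_const _).neg)
    fun i _ => (isSubGamma_neg_sq_gaussianReal (s i) v).comp_measurePreserving (hY i)

/-- The normalized chi-square statistic `Z_C = (2 #C)^{-1/2} ∑_{i ∈ C} (Y_i² - 1)` of an arbitrary
finite set `C` of indices: `zlin` and `ZCsq` are the cases where `C` is the whole array and a
submatrix. -/
def chiSqStat {ι : Type*} (C : Finset ι) (y : ι → ℝ) : ℝ :=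
  (∑ i ∈ C, (y i ^ 2 - 1)) / √(2 * C.card)

section ChiSqStat

variable {ι : Type*} {C : Finset ι}

@[fun_prop]
lemma measurable_chiSqStat : Measurable (chiSqStat C) := by
  unfold chiSqStat
  fun_prop

variable [Fintype ι]

lemma measureReal_chiSqStat_ge_le (hC : C.Nonempty) {x τ : ℝ} (hx : 0 ≤ x)
    (hτ : √(2 * x) + 2 * x / √(2 * C.card) ≤ τ) :
    (Measure.pi fun _ : ι => gaussianReal 0 1).real {y | τ ≤ chiSqStat C y} ≤ Real.exp (-x) := by
  have hk : (0 : ℝ) < C.card := by exact_mod_cast hC.card_pos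
  have hsub := isSubGamma_sum_sq (iIndepFun_pi (X := fun _ : ι => id) fun _ => by fun_prop)
    (measurePreserving_eval fun _ : ι => gaussianReal 0 1) C
  refine (measureReal_mono fun y hy => ?_).trans (hsub.measureReal_ge_le ?_ (by positivity) hx)
  · have hsqrt : √(2 * (2 * C.card) * x) = √(2 * x) * √(2 * C.card) := by
      rw [← Real.sqrt_mul (by positivity)]
      congr 1
      ring
    have hy' : τ * √(2 * C.card) ≤ ∑ i ∈ C, (y i ^ 2 - 1) := (le_div_iff₀ (by positivity)).1 hy
    have hτ' := mul_le_mul_of_nonneg_right hτ (Real.sqrt_nonneg (2 * C.card))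
    rw [add_mul, div_mul_cancel₀ _ (by positivity), ← hsqrt] at hτ'
    simpa [mul_comm, mul_left_comm] using hτ'.trans hy'
  · simpa using hk

lemma measureReal_chiSqStat_le_le (hC : C.Nonempty) (s : ι → ℝ) {h ρ : ℝ} (hh : 1 ≤ h)
    (hρ : 0 ≤ ρ) (hs : h * √(2 * C.card) ≤ (1 - ρ) * ∑ i ∈ C, s i ^ 2) :
    (Measure.pi fun i => gaussianReal (s i) 1).real {y | chiSqStat C y ≤ h} ≤
      Real.exp (-(ρ ^ 2 * h / 10)) := by
  have hk : (1 : ℝ) ≤ C.card := by exact_mod_cast hC.card_pos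
  set Q := ∑ i ∈ C, s i ^ 2 with hQdef
  have hQ : 0 ≤ Q := Finset.sum_nonneg fun _ _ => sq_nonneg _
  have hvar : ∑ i ∈ C, 2 * (1 : ℝ) * (1 + 2 * s i ^ 2) = 2 * (C.card + 2 * Q) := by
    simp [← Finset.mul_sum, Finset.sum_add_distrib, hQdef]
  have hsub := isSubGamma_sum_neg_sq (v := 1) (s := s)
    (iIndepFun_pi (μ := fun i => gaussianReal (s i) 1) (X := fun _ : ι => id)
      fun _ => by fun_prop)
    (measurePreserving_eval fun i => gaussianReal (s i) 1) C
  rw [NNReal.coe_one, hvar] at hsub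
  refine (measureReal_mono fun y hy => ?_).trans
    (hsub.measureReal_ge_le (by positivity) le_rfl (by positivity))
  have hnoise : √(2 * (2 * (C.card + 2 * Q)) * (ρ ^ 2 * h / 10)) ≤ ρ * Q := by
    have hr : √(2 * C.card) ^ 2 = 2 * C.card := Real.sq_sqrt (by positivity)
    have hr1 : 1 ≤ √(2 * C.card) := Real.one_le_sqrt.2 (by linarith)
    have hrQ : h * √(2 * C.card) ≤ Q := hs.trans (by nlinarith)
    have hQh : h ≤ Q := by nlinarith
    have hkQ : 2 * C.card * h ≤ Q ^ 2 := by
      calc 2 * C.card * h ≤ 2 * C.card * h ^ 2 := by gcongr; nlinarith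
        _ = (h * √(2 * C.card)) ^ 2 := by rw [mul_pow, hr, mul_comm]
        _ ≤ Q ^ 2 := by gcongr
    refine Real.sqrt_le_iff.2 ⟨by positivity, ?_⟩
    calc 2 * (2 * (C.card + 2 * Q)) * (ρ ^ 2 * h / 10)
        = ρ ^ 2 * ((2 * C.card * h + 4 * (Q * h)) / 5) := by ring
      _ ≤ ρ ^ 2 * Q ^ 2 := by gcongr; nlinarith
      _ = (ρ * Q) ^ 2 := by ring
  have hy' : ∑ i ∈ C, (y i ^ 2 - 1) ≤ h * √(2 * C.card) := (div_le_iff₀ (by positivity)).1 hy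
  have hsum : (∑ i ∈ C, fun y : ι → ℝ => -(y i ^ 2 - (1 + s i ^ 2))) y =
      Q - ∑ i ∈ C, (y i ^ 2 - 1) := by
    rw [Finset.sum_apply, hQdef, ← Finset.sum_sub_distrib]
    exact Finset.sum_congr rfl fun _ _ => by ring
  change _ ≤ (∑ i ∈ C, fun y : ι → ℝ => -(y i ^ 2 - (1 + s i ^ 2))) y
  rw [hsum]
  linarith

end ChiSqStat

/-! ### Error probabilities of the chi-square test -/

instance (N M : ℕ) (S : Fin N → Fin M → ℝ) : IsProbabilityMeasure (matLaw N M S) := by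
  unfold matLaw
  infer_instance

lemma zlin_eq_chiSqStat {N M : ℕ} (y : Fin N × Fin M → ℝ) :
    zlin N M y = chiSqStat Finset.univ y := by
  simp [zlin, chiSqStat, mul_assoc]

lemma ZCsq_eq_chiSqStat {N M : ℕ} (y : Fin N × Fin M → ℝ) (A : Finset (Fin N))
    (B : Finset (Fin M)) : ZCsq N M y A B = chiSqStat (A ×ˢ B) y := by
  simp [ZCsq, chiSqStat, Finset.sum_product, mul_assoc]

/-- The class `C_{nm}` of `n × m` submatrices of an `N × M` array, a submatrix `A × B` being encoded
as the pair `(A, B)`. -/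
def submatrices (N M n m : ℕ) : Finset (Finset (Fin N) × Finset (Fin M)) :=
  Finset.univ.powersetCard n ×ˢ Finset.univ.powersetCard m

lemma mem_submatrices {N M n m : ℕ} {C : Finset (Fin N) × Finset (Fin M)} :
    C ∈ submatrices N M n m ↔ C.1.card = n ∧ C.2.card = m := by
  simp [submatrices]

lemma card_submatrices (N M n m : ℕ) : (submatrices N M n m).card = Gnm N M n m := by
  simp [submatrices, Gnm]

section Test

variable {N M n m : ℕ} {H T : ℝ} {y : Fin N × Fin M → ℝ}

lemma psiZsq_nonneg : 0 ≤ psiZsq N M n m H T y := by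
  unfold psiZsq
  split_ifs <;> simp

lemma psiZsq_le_one : psiZsq N M n m H T y ≤ 1 := by
  unfold psiZsq
  split_ifs <;> simp

lemma psiZsq_eq_zero (hT : 0 ≤ T) (hlin : chiSqStat Finset.univ y ≤ H)
    (hscan : ∀ C ∈ submatrices N M n m, chiSqStat (C.1 ×ˢ C.2) y ≤ T) :
    psiZsq N M n m H T y = 0 := by
  have hmax : zmax N M n m y ≤ T := by
    refine Real.sSup_le ?_ hT
    rintro _ ⟨A, B, hA, hB, rfl⟩
    rw [ZCsq_eq_chiSqStat]
    exact hscan (A, B) (mem_submatrices.2 ⟨hA, hB⟩)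
  rw [← zlin_eq_chiSqStat] at hlin
  simp [psiZsq, hlin.not_gt, hmax.not_gt]

lemma psiZsq_eq_one (hlin : H < chiSqStat Finset.univ y) : psiZsq N M n m H T y = 1 := by
  rw [← zlin_eq_chiSqStat] at hlin
  unfold psiZsq
  split_ifs <;> simp

end Test

lemma integral_le_measureReal {Ω : Type*} [MeasurableSpace Ω] {μ : Measure Ω} [IsFiniteMeasure μ]
    {f : Ω → ℝ} {E : Set Ω} (hE : MeasurableSet E) (hf0 : ∀ ω, 0 ≤ f ω) (hf1 : ∀ ω, f ω ≤ 1)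
    (hf : ∀ ω ∉ E, f ω = 0) : ∫ ω, f ω ∂μ ≤ μ.real E := by
  rw [← integral_indicator_one hE]
  refine integral_mono_of_nonneg (.of_forall hf0) ((integrable_const 1).indicator hE)
    (.of_forall fun ω => ?_)
  by_cases hω : ω ∈ E
  · simpa [hω] using hf1 ω
  · simp [hω, hf ω hω]

section Errors

variable {N M n m : ℕ} {a H T : ℝ}

lemma alphaErr_psiZsq_le_add (hT : 0 ≤ T) :
    alphaErr N M (psiZsq N M n m H T) ≤
      (matLaw N M fun _ _ => 0).real {y | H ≤ chiSqStat Finset.univ y} +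
        ∑ C ∈ submatrices N M n m,
          (matLaw N M fun _ _ => 0).real {y | T ≤ chiSqStat (C.1 ×ˢ C.2) y} := by
  have hmeas (C : Finset (Fin N × Fin M)) (τ : ℝ) : MeasurableSet {y | τ ≤ chiSqStat C y} :=
    measurableSet_le measurable_const measurable_chiSqStat
  calc alphaErr N M (psiZsq N M n m H T)
      ≤ (matLaw N M fun _ _ => 0).real ({y | H ≤ chiSqStat Finset.univ y} ∪
          ⋃ C ∈ submatrices N M n m, {y | T ≤ chiSqStat (C.1 ×ˢ C.2) y}) := by
        refine integral_le_measureReal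
          ((hmeas _ _).union (Finset.measurableSet_biUnion _ fun _ _ => hmeas _ _))
          (fun _ => psiZsq_nonneg) (fun _ => psiZsq_le_one) fun y hy => ?_
        simp only [Set.mem_union, Set.mem_iUnion, Set.mem_ofPred_eq, not_or, not_exists,
          not_le] at hy
        exact psiZsq_eq_zero hT hy.1.le fun C hC => (hy.2 C hC).le
    _ ≤ _ := (measureReal_union_le _ _).trans
        (add_le_add_right (measureReal_biUnion_finset_le _ _) _)

lemma alphaErr_psiZsq_le {x : ℝ} (hN : 0 < N) (hM : 0 < M) (hn : 0 < n) (hm : 0 < m) (hH : 2 ≤ H)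
    (hx : 0 ≤ x) (hT : √(2 * x) + 2 * x / √(2 * (n * m)) ≤ T) :
    alphaErr N M (psiZsq N M n m H T) ≤
      Real.exp (-(H / 4)) + Gnm N M n m * Real.exp (-x) := by
  have hlin : (matLaw N M fun _ _ => 0).real {y | H ≤ chiSqStat Finset.univ y} ≤
      Real.exp (-(H / 4)) := by
    have : Nonempty (Fin N × Fin M) := ⟨⟨0, hN⟩, ⟨0, hM⟩⟩
    have hcard : (1 : ℝ) ≤ (Finset.univ : Finset (Fin N × Fin M)).card := by
      exact_mod_cast Finset.univ_nonempty.card_pos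
    refine measureReal_chiSqStat_ge_le Finset.univ_nonempty (by linarith) ?_
    have hsqrt : √(2 * (H / 4)) ≤ H / 2 := Real.sqrt_le_iff.2 ⟨by linarith, by nlinarith⟩
    have hdiv : 2 * (H / 4) / √(2 * (Finset.univ : Finset (Fin N × Fin M)).card) ≤ 2 * (H / 4) :=
      div_le_self (by linarith) (Real.one_le_sqrt.2 (by linarith))
    linarith
  have hscan : ∀ C ∈ submatrices N M n m,
      (matLaw N M fun _ _ => 0).real {y | T ≤ chiSqStat (C.1 ×ˢ C.2) y} ≤ Real.exp (-x) := by
    intro C hC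
    obtain ⟨hA, hB⟩ := mem_submatrices.1 hC
    refine measureReal_chiSqStat_ge_le (.product ?_ ?_) hx ?_
    · rwa [← Finset.card_pos, hA]
    · rwa [← Finset.card_pos, hB]
    · rwa [Finset.card_product, hA, hB, Nat.cast_mul]
  calc _ ≤ _ := alphaErr_psiZsq_le_add ((by positivity : (0 : ℝ) ≤ _).trans hT)
    _ ≤ _ := add_le_add hlin (Finset.sum_le_card_nsmul _ _ _ hscan)
    _ = _ := by rw [card_submatrices, nsmul_eq_mul]

lemma betaErr_psiZsq_le_measureReal (S : Fin N → Fin M → ℝ) :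
    betaErr N M S (psiZsq N M n m H T) ≤
      (matLaw N M S).real {y | chiSqStat Finset.univ y ≤ H} := by
  refine integral_le_measureReal (measurableSet_le measurable_chiSqStat measurable_const)
    (fun y => sub_nonneg.2 psiZsq_le_one) (fun y => sub_le_self _ psiZsq_nonneg) fun y hy => ?_
  rw [psiZsq_eq_one (not_le.1 hy), sub_self]

lemma sq_mul_le_sum_sq_of_mem_SAltTS (ha : 0 ≤ a) {S : Fin N → Fin M → ℝ}
    (hS : S ∈ SAltTS N M n m a) : a ^ 2 * (n * m) ≤ ∑ ij : Fin N × Fin M, S ij.1 ij.2 ^ 2 := by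
  obtain ⟨A, B, rfl, rfl, hge, -⟩ := hS
  calc a ^ 2 * (A.card * B.card) = ∑ _ij ∈ A ×ˢ B, a ^ 2 := by simp [mul_comm]
    _ ≤ ∑ ij ∈ A ×ˢ B, S ij.1 ij.2 ^ 2 := Finset.sum_le_sum fun ij hij => by
        obtain ⟨hi, hj⟩ := Finset.mem_product.1 hij
        simpa using pow_le_pow_left₀ ha (hge _ _ hi hj) 2
    _ ≤ _ := Finset.sum_le_univ_sum_of_nonneg fun _ => sq_nonneg _

lemma betaMaxTS_psiZsq_nonneg : 0 ≤ betaMaxTS N M n m a (psiZsq N M n m H T) := by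
  refine Real.sSup_nonneg ?_
  rintro _ ⟨S, -, rfl⟩
  exact integral_nonneg fun y => sub_nonneg.2 psiZsq_le_one

lemma betaMaxTS_psiZsq_le {ρ : ℝ} (hN : 0 < N) (hM : 0 < M) (ha : 0 ≤ a) (hH : 1 ≤ H)
    (hρ0 : 0 ≤ ρ) (hρ1 : ρ ≤ 1) (hHa : H * √(2 * (N * M)) ≤ (1 - ρ) * (a ^ 2 * (n * m))) :
    betaMaxTS N M n m a (psiZsq N M n m H T) ≤ Real.exp (-(ρ ^ 2 * H / 10)) := by
  have : Nonempty (Fin N × Fin M) := ⟨⟨0, hN⟩, ⟨0, hM⟩⟩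
  refine Real.sSup_le ?_ (Real.exp_nonneg _)
  rintro _ ⟨S, hS, rfl⟩
  refine (betaErr_psiZsq_le_measureReal S).trans
    (measureReal_chiSqStat_le_le Finset.univ_nonempty _ hH hρ0 ?_)
  simp only [Finset.card_univ, Fintype.card_prod, Fintype.card_fin, Nat.cast_mul]
  exact hHa.trans (mul_le_mul_of_nonneg_left (sq_mul_le_sum_sq_of_mem_SAltTS ha hS)
    (sub_nonneg.2 hρ1))

end Errors

/-! ### The number of submatrices -/

section Counting

variable {N M n m : ℕ}

lemma div_le_choose (hn : 0 < n) (hnN : n ≤ N) : (N : ℝ) / n ≤ N.choose n := by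
  obtain ⟨k, rfl⟩ := Nat.exists_eq_add_one.2 hn
  obtain ⟨K, rfl⟩ := Nat.exists_eq_add_one.2 (hn.trans_le hnN)
  rw [div_le_iff₀ (by positivity)]
  have hle : K + 1 ≤ (K + 1).choose (k + 1) * (k + 1) := by
    rw [← Nat.add_one_mul_choose_eq]
    exact Nat.le_mul_of_pos_right _ (Nat.choose_pos (Nat.le_of_succ_le_succ hnN))
  exact_mod_cast hle

lemma log_choose_le (hn : 0 < n) (hnN : n ≤ N) :
    Real.log (N.choose n) ≤ n * (1 + Real.log (N / n)) := by
  have hN : 0 < N := hn.trans_le hnN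
  rw [Real.log_le_iff_le_exp (by exact_mod_cast Nat.choose_pos hnN)]
  calc (N.choose n : ℝ) ≤ (N : ℝ) ^ n / n.factorial := Nat.choose_le_pow_div n N
    _ = (n : ℝ) ^ n / n.factorial * (N / n : ℝ) ^ n := by
        rw [div_pow]
        field_simp
    _ ≤ Real.exp n * (N / n : ℝ) ^ n := by
        gcongr
        exact Real.pow_div_factorial_le_exp _ n.cast_nonneg _
    _ = Real.exp (n * (1 + Real.log (N / n))) := by
        rw [mul_add, mul_one, Real.exp_add, Real.exp_nat_mul, Real.exp_log (by positivity)]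

lemma Gnm_pos (hnN : n ≤ N) (hmM : m ≤ M) : 0 < Gnm N M n m :=
  Nat.mul_pos (Nat.choose_pos hnN) (Nat.choose_pos hmM)

lemma div_le_Gnm (hn : 0 < n) (hnN : n ≤ N) (hmM : m ≤ M) : (N : ℝ) / n ≤ Gnm N M n m := by
  refine (div_le_choose hn hnN).trans ?_
  exact_mod_cast Nat.le_mul_of_pos_right _ (Nat.choose_pos hmM)

lemma log_Gnm_div_le (hn : 0 < n) (hnN : n ≤ N) (hm : 0 < m) (hmM : m ≤ M) :
    Real.log (Gnm N M n m) / (n * m) ≤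
      1 / m + 1 / n + (Real.log (N / n) / m + Real.log (M / m) / n) := by
  have hNn : (N.choose n : ℝ) ≠ 0 := by exact_mod_cast (Nat.choose_pos hnN).ne'
  have hMm : (M.choose m : ℝ) ≠ 0 := by exact_mod_cast (Nat.choose_pos hmM).ne'
  calc Real.log (Gnm N M n m) / (n * m)
      = (Real.log (N.choose n) + Real.log (M.choose m)) / (n * m) := by
        rw [Gnm, Nat.cast_mul, Real.log_mul hNn hMm]
    _ ≤ (n * (1 + Real.log (N / n)) + m * (1 + Real.log (M / m))) / (n * m) := by
        gcongr
        exacts [log_choose_le hn hnN, log_choose_le hm hmM]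
    _ = _ := by
        field_simp
        ring

end Counting

/-! ### Asymptotics -/

section Asymptotics

variable {α : Type*} {l : Filter α}

lemma eventually_sqrt_add_div_le {L k : α → ℝ} (hL : ∀ t, 0 ≤ L t)
    (hLk : Tendsto (fun t => L t / k t) l (𝓝 0)) {η κ : ℝ} (hη : 0 ≤ η) (hκ : 2 * η < κ) :
    ∀ᶠ t in l, √(2 * (η * L t)) + 2 * (η * L t) / √(2 * k t) ≤ √(κ * L t) := by
  have hlim : Tendsto (fun t => √(2 * η) * (1 + √(η * (L t / k t)))) l (𝓝 √(2 * η)) := by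
    simpa using ((hLk.const_mul η).sqrt.const_add 1).const_mul √(2 * η)
  filter_upwards [hlim.eventually_le_const (Real.sqrt_lt_sqrt (by positivity) hκ)] with t ht
  have hx : 0 ≤ 2 * (η * L t) := mul_nonneg zero_le_two (mul_nonneg hη (hL t))
  have hdiv : 2 * (η * L t) / √(2 * k t) = √(2 * (η * L t)) * √(η * (L t / k t)) := by
    rw [← Real.mul_self_sqrt hx, mul_div_assoc, Real.mul_self_sqrt hx, ← Real.sqrt_div hx,
      mul_div_mul_left _ _ two_ne_zero, mul_div_assoc]
  calc √(2 * (η * L t)) + 2 * (η * L t) / √(2 * k t)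
      = √(2 * η) * (1 + √(η * (L t / k t))) * √(L t) := by
        rw [hdiv, ← mul_assoc, Real.sqrt_mul (by positivity)]
        ring
    _ ≤ √κ * √(L t) := mul_le_mul_of_nonneg_right ht (Real.sqrt_nonneg _)
    _ = √(κ * L t) := (Real.sqrt_mul (by linarith) _).symm

lemma tendsto_exp_neg_mul {f : α → ℝ} (hf : Tendsto f l atTop) {k : ℝ} (hk : 0 < k) :
    Tendsto (fun t => Real.exp (-(k * f t))) l (𝓝 0) :=
  Real.tendsto_exp_neg_atTop_nhds_zero.comp (hf.const_mul_atTop hk)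

variable {N M n m : α → ℕ} {a H : α → ℝ}

lemma tendsto_Gnm_atTop (hb : ∀ t, 1 ≤ n t ∧ n t ≤ N t ∧ 1 ≤ m t ∧ m t ≤ M t)
    (hp : Tendsto (fun t => (n t : ℝ) / N t) l (𝓝 0)) :
    Tendsto (fun t => (Gnm (N t) (M t) (n t) (m t) : ℝ)) l atTop := by
  have hpos (t) : (0 : ℝ) < n t / N t :=
    div_pos (by exact_mod_cast (hb t).1) (by exact_mod_cast (hb t).1.trans (hb t).2.1)
  have hinv := (tendsto_nhdsWithin_iff.2 ⟨hp, .of_forall hpos⟩).inv_tendsto_nhdsGT_zero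
  refine tendsto_atTop_mono (fun t => ?_) hinv
  simpa only [Pi.inv_apply, inv_div] using div_le_Gnm (hb t).1 (hb t).2.1 (hb t).2.2.2

lemma tendsto_log_Gnm_div (hb : ∀ t, 1 ≤ n t ∧ n t ≤ N t ∧ 1 ≤ m t ∧ m t ≤ M t)
    (hn : Tendsto n l atTop) (hm : Tendsto m l atTop)
    (htend : Tendsto (fun t => Real.log ((N t : ℝ) / n t) / m t +
      Real.log ((M t : ℝ) / m t) / n t) l (𝓝 0)) :
    Tendsto (fun t => Real.log (Gnm (N t) (M t) (n t) (m t)) / (n t * m t)) l (𝓝 0) := by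
  have hbound := ((tendsto_one_div_atTop_nhds_zero_nat.comp hm).add
    (tendsto_one_div_atTop_nhds_zero_nat.comp hn)).add htend
  rw [add_zero, add_zero] at hbound
  refine squeeze_zero (fun t => ?_) (fun t => ?_) hbound
  · exact div_nonneg (Real.log_natCast_nonneg _) (by positivity)
  · obtain ⟨hn1, hnN, hm1, hmM⟩ := hb t
    exact log_Gnm_div_le hn1 hnN hm1 hmM

lemma tendsto_alphaErr_psiZsq (hb : ∀ t, 1 ≤ n t ∧ n t ≤ N t ∧ 1 ≤ m t ∧ m t ≤ M t)
    (hG : Tendsto (fun t => (Gnm (N t) (M t) (n t) (m t) : ℝ)) l atTop)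
    (hL : Tendsto (fun t => Real.log (Gnm (N t) (M t) (n t) (m t)) / (n t * m t)) l (𝓝 0))
    (hH : Tendsto H l atTop) {δ : ℝ} (hδ : 0 < δ) :
    Tendsto (fun t => alphaErr (N t) (M t) (psiZsq (N t) (M t) (n t) (m t) (H t)
      √((2 + δ) * Real.log (Gnm (N t) (M t) (n t) (m t))))) l (𝓝 0) := by
  have hbound := (tendsto_exp_neg_mul hH (inv_pos.2 four_pos)).add
    (tendsto_exp_neg_mul (Real.tendsto_log_atTop.comp hG) (div_pos hδ four_pos))
  rw [add_zero] at hbound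
  refine squeeze_zero' (.of_forall fun t => integral_nonneg fun y => psiZsq_nonneg) ?_ hbound
  -- splitting the margin `δ`: the level `(1 + δ/4) log G` leaves `√(2 + δ) - √(2 + δ/2)` of the
  -- threshold for the linear term of the deviation bound
  have hT := eventually_sqrt_add_div_le (fun _ => Real.log_natCast_nonneg _) hL
    (η := 1 + δ / 4) (κ := 2 + δ) (by linarith) (by linarith)
  filter_upwards [hT, hH.eventually_ge_atTop 2] with t hTt hHt
  obtain ⟨hn1, hnN, hm1, hmM⟩ := hb t
  have hGpos : (0 : ℝ) < Gnm (N t) (M t) (n t) (m t) := by exact_mod_cast Gnm_pos hnN hmM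
  refine (alphaErr_psiZsq_le (hn1.trans hnN) (hm1.trans hmM) hn1 hm1 hHt
    (mul_nonneg (by linarith) (Real.log_natCast_nonneg _)) hTt).trans_eq ?_
  congr 1
  · ring_nf
  · nth_rw 1 [← Real.exp_log hGpos, ← Real.exp_add]
    simp only [Function.comp_apply]
    ring_nf

lemma sqrt_mul_mul_div_mul_div {x y X Y : ℝ} (hx : 0 ≤ x) (hy : 0 ≤ y) :
    √(x * y * (x / X) * (y / Y)) = x * y / √(X * Y) := by
  rw [show x * y * (x / X) * (y / Y) = (x * y) ^ 2 / (X * Y) by ring,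
    Real.sqrt_div (sq_nonneg _), Real.sqrt_sq (mul_nonneg hx hy)]

lemma tendsto_betaMaxTS_psiZsq (hb : ∀ t, 1 ≤ n t ∧ n t ≤ N t ∧ 1 ≤ m t ∧ m t ≤ M t)
    (ha : ∀ t, 0 ≤ a t) (hH : Tendsto H l atTop) {c : ℝ} (hc0 : 0 ≤ c) (hc : c < √2)
    (hHc : ∀ t, H t ≤
      c * (a t ^ 2 / 2 * √((n t : ℝ) * m t * ((n t : ℝ) / N t) * ((m t : ℝ) / M t))))
    (T : α → ℝ) :
    Tendsto (fun t => betaMaxTS (N t) (M t) (n t) (m t) (a t)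
      (psiZsq (N t) (M t) (n t) (m t) (H t) (T t))) l (𝓝 0) := by
  set ρ := 1 - c / √2 with hρdef
  have hρ0 : 0 < ρ := sub_pos.2 ((div_lt_one (by positivity)).2 hc)
  have hρ1 : ρ ≤ 1 := sub_le_self _ (by positivity)
  refine squeeze_zero' (.of_forall fun t => betaMaxTS_psiZsq_nonneg) ?_
    (tendsto_exp_neg_mul hH (by positivity : 0 < ρ ^ 2 / 10))
  filter_upwards [hH.eventually_ge_atTop 1] with t hHt
  obtain ⟨hn1, hnN, hm1, hmM⟩ := hb t
  have hN : 0 < N t := hn1.trans hnN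
  have hM : 0 < M t := hm1.trans hmM
  rw [div_mul_eq_mul_div]
  refine betaMaxTS_psiZsq_le hN hM (ha t) hHt hρ0.le hρ1 ?_
  have hHc' := hHc t
  rw [sqrt_mul_mul_div_mul_div (Nat.cast_nonneg _) (Nat.cast_nonneg _)] at hHc'
  calc H t * √(2 * (N t * M t))
      ≤ c * (a t ^ 2 / 2 * (n t * m t / √(N t * M t))) * √(2 * (N t * M t)) := by gcongr
    _ = c * (a t ^ 2 * (n t * m t)) * (√2 / 2) := by
        rw [Real.sqrt_mul zero_le_two]
        field_simp
    _ = (1 - ρ) * (a t ^ 2 * (n t * m t)) := by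
        rw [Real.sqrt_div_self', hρdef]
        ring

theorem stmt12_general (hb : ∀ t, 1 ≤ n t ∧ n t ≤ N t ∧ 1 ≤ m t ∧ m t ≤ M t)
    (ha : ∀ t, 0 ≤ a t)
    (hG : Tendsto (fun t => (Gnm (N t) (M t) (n t) (m t) : ℝ)) l atTop)
    (hL : Tendsto (fun t => Real.log (Gnm (N t) (M t) (n t) (m t)) / (n t * m t)) l (𝓝 0))
    (hH : Tendsto H l atTop) {c : ℝ} (hc0 : 0 ≤ c) (hc : c < √2)
    (hHc : ∀ t, H t ≤
      c * (a t ^ 2 / 2 * √((n t : ℝ) * m t * ((n t : ℝ) / N t) * ((m t : ℝ) / M t))))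
    {δ : ℝ} (hδ : 0 < δ) :
    Tendsto (fun t =>
      alphaErr (N t) (M t) (psiZsq (N t) (M t) (n t) (m t) (H t)
          √((2 + δ) * Real.log (Gnm (N t) (M t) (n t) (m t)))) +
        betaMaxTS (N t) (M t) (n t) (m t) (a t) (psiZsq (N t) (M t) (n t) (m t) (H t)
          √((2 + δ) * Real.log (Gnm (N t) (M t) (n t) (m t))))) l (𝓝 0) := by
  simpa only [add_zero] using (tendsto_alphaErr_psiZsq hb hG hL hH hδ).add
    (tendsto_betaMaxTS_psiZsq hb ha hH hc0 hc hHc _)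

end Asymptotics

/-- Theorem 7 (two-sided alternative, upper bounds): if `a²√(nmpq) → ∞` or
`liminf a²√(nm)/(2√(n log(1/p)+m log(1/q))) > 1`, then the chi-square test
`ψ^z = max{ψ^z_lin, ψ^z_max}` with `H → ∞`, `H < c (a²/2)√(nmpq)` for some
`c ∈ (0,1)`, and `T_{nm} = √((2+δ) log G_{nm})` for sufficiently small `δ > 0`
satisfies `γ^±_{nm,a}(ψ^z) → 0`. -/
theorem stmt12 (N M n m : ℕ → ℕ) (a H : ℕ → ℝ)
    (hb : ∀ t, 1 ≤ n t ∧ n t ≤ N t ∧ 1 ≤ m t ∧ m t ≤ M t)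
    (ha : ∀ t, 0 < a t)
    (hN : Tendsto N atTop atTop) (hM : Tendsto M atTop atTop)
    (hn : Tendsto n atTop atTop) (hm : Tendsto m atTop atTop)
    (hp : Tendsto (fun t => (n t : ℝ) / N t) atTop (nhds 0))
    (hq : Tendsto (fun t => (m t : ℝ) / M t) atTop (nhds 0))
    (htend : Tendsto (fun t =>
        Real.log ((N t : ℝ) / n t) / m t + Real.log ((M t : ℝ) / m t) / n t)
      atTop (nhds 0))
    (hH : Tendsto H atTop atTop)
    (hHc : ∃ c : ℝ, 0 < c ∧ c < 1 ∧ ∀ t,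
      H t < c * (a t ^ 2 / 2 *
        Real.sqrt ((n t : ℝ) * m t * ((n t : ℝ) / N t) * ((m t : ℝ) / M t))))
    (hcond :
      Tendsto (fun t => a t ^ 2 *
          Real.sqrt ((n t : ℝ) * m t * ((n t : ℝ) / N t) * ((m t : ℝ) / M t)))
        atTop atTop ∨
      1 < Filter.liminf (fun t =>
          a t ^ 2 * Real.sqrt ((n t : ℝ) * m t) /
            (2 * Real.sqrt ((n t : ℝ) * Real.log ((N t : ℝ) / n t) +
              (m t : ℝ) * Real.log ((M t : ℝ) / m t)))) atTop) :
    ∃ δ₀ : ℝ, 0 < δ₀ ∧ ∀ δ : ℝ, 0 < δ → δ ≤ δ₀ →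
      Tendsto (fun t =>
        alphaErr (N t) (M t) (psiZsq (N t) (M t) (n t) (m t) (H t)
            (Real.sqrt ((2 + δ) * Real.log (Gnm (N t) (M t) (n t) (m t) : ℝ)))) +
          betaMaxTS (N t) (M t) (n t) (m t) (a t)
            (psiZsq (N t) (M t) (n t) (m t) (H t)
              (Real.sqrt ((2 + δ) * Real.log (Gnm (N t) (M t) (n t) (m t) : ℝ)))))
        atTop (nhds 0) := by
  obtain ⟨c, hc0, hc1, hHc⟩ := hHc
  have hc : c < √2 := hc1.trans Real.one_lt_sqrt_two
  exact ⟨1, one_pos, fun δ hδ _ => stmt12_general hb (fun t => (ha t).le) (tendsto_Gnm_atTop hb hp)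
    (tendsto_log_Gnm_div hb hn hm htend) hH hc0.le hc (fun t => (hHc t).le) hδ⟩
end
end

section
/- (Truncated exponential moment bound, truncation at the overlap sum.) Assume kl ≥ 1, so V is nonempty. For every T > 0 with T ≤ 2z_{kl}, E_0[exp(−b² + b(Y_{C₁} + Y_{C₂})) · 1{Y_V ≤ T}] ≤ exp(T²/2 − (T − z_{kl})²). -/
/-!
For `s ≥ 0` the indicator is dominated by a Chernoff factor, `1{u·y ≤ T} ≤ exp (s (T - u·y))`, and
a standard Gaussian vector satisfies `E exp (c·y) = exp (|c|² / 2)`. For a unit vector `u`, the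
optimal choice `s = w·u - T` therefore gives
`E[exp (w·y) 1{u·y ≤ T}] ≤ exp (|w|² / 2 - (w·u - T)² / 2)` whenever `T ≤ w·u`.
Here `w = a (1_{C₁} + 1_{C₂})` and `u = 1_V / √#V`, so that `w·u = 2z` and
`|w|² = a² (#C₁ + #C₂) + 2 z²` with `z = a √#V`; finally `z² - (2z - T)² / 2 = T² / 2 - (T - z)²`.
-/

open MeasureTheory ProbabilityTheory Filter Topology
open scoped Classical

noncomputable section

lemma integral_mul_ite_le_exp_mul_integral {Ω : Type*} [MeasurableSpace Ω] {μ : Measure Ω}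
    {f X : Ω → ℝ} {s : ℝ} (hf : 0 ≤ f) (hs : 0 ≤ s)
    (h_int : Integrable (fun ω => f ω * Real.exp (-s * X ω)) μ) (T : ℝ) :
    ∫ ω, f ω * (if X ω ≤ T then 1 else 0) ∂μ ≤
      Real.exp (s * T) * ∫ ω, f ω * Real.exp (-s * X ω) ∂μ := by
  have indicator_le (x : ℝ) :
      (if x ≤ T then 1 else 0) ≤ Real.exp (s * T) * Real.exp (-s * x) := by
    rw [← Real.exp_add]
    split_ifs with hx
    · exact Real.one_le_exp (by linarith [mul_le_mul_of_nonneg_left hx hs])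
    · positivity
  rw [← integral_const_mul]
  refine integral_mono_of_nonneg (ae_of_all _ fun ω => ?_) (h_int.const_mul _)
    (ae_of_all _ fun ω => ?_)
  · exact mul_nonneg (hf ω) (by split_ifs <;> norm_num)
  · calc f ω * (if X ω ≤ T then 1 else 0)
        ≤ f ω * (Real.exp (s * T) * Real.exp (-s * X ω)) :=
          mul_le_mul_of_nonneg_left (indicator_le (X ω)) (hf ω)
      _ = Real.exp (s * T) * (f ω * Real.exp (-s * X ω)) := mul_left_comm _ _ _

section Gaussian

variable {ι : Type*} [Fintype ι]

lemma integrable_exp_dotProduct_pi_gaussianReal (m : ι → ℝ) (v : ι → NNReal) (c : ι → ℝ) :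
    Integrable (fun y => Real.exp (c ⬝ᵥ y)) (Measure.pi fun i => gaussianReal (m i) (v i)) := by
  simp_rw [dotProduct, Real.exp_sum]
  exact Integrable.fintype_prod (f := fun i x => Real.exp (c i * x))
    fun i => integrable_exp_mul_gaussianReal (c i)

lemma integral_exp_dotProduct_pi_gaussianReal (m : ι → ℝ) (v : ι → NNReal) (c : ι → ℝ) :
    ∫ y, Real.exp (c ⬝ᵥ y) ∂(Measure.pi fun i => gaussianReal (m i) (v i)) =
      Real.exp (∑ i, (m i * c i + v i * c i ^ 2 / 2)) := by
  simp_rw [dotProduct, Real.exp_sum]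
  rw [integral_fintype_prod_eq_prod (f := fun i x => Real.exp (c i * x))]
  exact Finset.prod_congr rfl fun i _ => congrFun mgf_id_gaussianReal (c i)

lemma integral_exp_dotProduct_pi_gaussianReal_zero_one (c : ι → ℝ) :
    ∫ y, Real.exp (c ⬝ᵥ y) ∂(Measure.pi fun _ : ι => gaussianReal 0 1) =
      Real.exp (c ⬝ᵥ c / 2) := by
  rw [integral_exp_dotProduct_pi_gaussianReal]
  simp only [zero_mul, zero_add, NNReal.coe_one, one_mul, ← Finset.sum_div, dotProduct, pow_two]

lemma integral_exp_dotProduct_mul_ite_le {w u : ι → ℝ} {T : ℝ} (hu : u ⬝ᵥ u = 1)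
    (hT : T ≤ w ⬝ᵥ u) :
    ∫ y, Real.exp (w ⬝ᵥ y) * (if u ⬝ᵥ y ≤ T then 1 else 0)
        ∂(Measure.pi fun _ : ι => gaussianReal 0 1) ≤
      Real.exp (w ⬝ᵥ w / 2 - (w ⬝ᵥ u - T) ^ 2 / 2) := by
  set s := w ⬝ᵥ u - T with hs
  have exp_tilt (y : ι → ℝ) :
      Real.exp (w ⬝ᵥ y) * Real.exp (-s * u ⬝ᵥ y) = Real.exp ((w - s • u) ⬝ᵥ y) := by
    rw [← Real.exp_add, sub_dotProduct, smul_dotProduct, smul_eq_mul, neg_mul, sub_eq_add_neg]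
  have norm_sq_tilt : (w - s • u) ⬝ᵥ (w - s • u) = w ⬝ᵥ w - 2 * s * w ⬝ᵥ u + s ^ 2 := by
    simp only [sub_dotProduct, dotProduct_sub, smul_dotProduct, dotProduct_smul, smul_eq_mul, hu,
      dotProduct_comm u w]
    ring
  have h_int : Integrable (fun y => Real.exp (w ⬝ᵥ y) * Real.exp (-s * u ⬝ᵥ y))
      (Measure.pi fun _ : ι => gaussianReal 0 1) := by
    simpa only [exp_tilt] using
      integrable_exp_dotProduct_pi_gaussianReal (fun _ => 0) (fun _ => 1) (w - s • u)
  calc _ ≤ Real.exp (s * T) * ∫ y, Real.exp (w ⬝ᵥ y) * Real.exp (-s * u ⬝ᵥ y)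
        ∂(Measure.pi fun _ : ι => gaussianReal 0 1) :=
        integral_mul_ite_le_exp_mul_integral (fun _ => Real.exp_nonneg _) (sub_nonneg.2 hT) h_int T
    _ = Real.exp (s * T + (w ⬝ᵥ w - 2 * s * w ⬝ᵥ u + s ^ 2) / 2) := by
        simp_rw [exp_tilt, integral_exp_dotProduct_pi_gaussianReal_zero_one, norm_sq_tilt,
          Real.exp_add]
    _ = Real.exp (w ⬝ᵥ w / 2 - s ^ 2 / 2) := by
        congr 1
        rw [hs]
        ring

end Gaussian

section NormalizedSum

variable {ι : Type*}

/-- The normalized sum `Y_U = (#U)^{-1/2} ∑_{i ∈ U} y_i` of an array over a finite index set,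
of which the submatrix sums `YC` are the case `U = A × B`. It is `0` for empty `U`. -/
def normalizedSum (U : Finset ι) (y : ι → ℝ) : ℝ := (∑ i ∈ U, y i) / √(U.card : ℝ)

lemma sqrt_card_mul_normalizedSum (U : Finset ι) (y : ι → ℝ) :
    √(U.card : ℝ) * normalizedSum U y = ∑ i ∈ U, y i := by
  obtain rfl | hU := U.eq_empty_or_nonempty
  · simp
  · have : √(U.card : ℝ) ≠ 0 := by simpa using hU.ne_empty
    exact mul_div_cancel₀ _ this

lemma YC_eq_normalizedSum (N M : ℕ) (y : Fin N × Fin M → ℝ) (A : Finset (Fin N))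
    (B : Finset (Fin M)) : YC N M y A B = normalizedSum (A ×ˢ B) y := by
  rw [YC, normalizedSum, Finset.sum_product, Finset.card_product, Nat.cast_mul]

/-- The vector `1_U / √#U`, a unit vector for nonempty `U`, through which the normalized sum is the
linear form `Y_U = (1_U / √#U) ⬝ᵥ y`. It is `0` for empty `U`. -/
def normalizedIndicator (U : Finset ι) : ι → ℝ := (√(U.card : ℝ))⁻¹ • (U : Set ι).indicator 1

variable [Fintype ι]

lemma indicator_one_dotProduct (U : Finset ι) (y : ι → ℝ) :
    (U : Set ι).indicator 1 ⬝ᵥ y = ∑ i ∈ U, y i := by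
  simp [dotProduct, Set.indicator_apply]

lemma normalizedIndicator_dotProduct (U : Finset ι) (y : ι → ℝ) :
    normalizedIndicator U ⬝ᵥ y = normalizedSum U y := by
  rw [normalizedIndicator, smul_dotProduct, indicator_one_dotProduct, smul_eq_mul, inv_mul_eq_div,
    normalizedSum]

lemma indicator_one_dotProduct_indicator_one [DecidableEq ι] (U V : Finset ι) :
    (U : Set ι).indicator 1 ⬝ᵥ (V : Set ι).indicator 1 = ((U ∩ V).card : ℝ) := by
  rw [indicator_one_dotProduct]
  simp [Set.indicator_apply]

lemma normalizedIndicator_dotProduct_self {U : Finset ι} (hU : U.Nonempty) :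
    normalizedIndicator U ⬝ᵥ normalizedIndicator U = 1 := by
  have card_ne_zero : (U.card : ℝ) ≠ 0 := by simpa using hU.ne_empty
  rw [normalizedIndicator, smul_dotProduct, dotProduct_smul, indicator_one_dotProduct_indicator_one,
    Finset.inter_self, smul_eq_mul, smul_eq_mul, ← mul_assoc, ← mul_inv,
    Real.mul_self_sqrt (Nat.cast_nonneg _), inv_mul_cancel₀ card_ne_zero]

lemma indicator_one_add_dotProduct_self [DecidableEq ι] (U V : Finset ι) :
    ((U : Set ι).indicator 1 + (V : Set ι).indicator 1) ⬝ᵥ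
        ((U : Set ι).indicator 1 + (V : Set ι).indicator 1) =
      (U.card + V.card + 2 * (U ∩ V).card : ℝ) := by
  simp only [add_dotProduct, dotProduct_add, indicator_one_dotProduct_indicator_one,
    Finset.inter_self, Finset.inter_comm V U]
  ring

lemma indicator_one_add_dotProduct_normalizedIndicator_inter [DecidableEq ι]
    (U V : Finset ι) :
    ((U : Set ι).indicator 1 + (V : Set ι).indicator 1) ⬝ᵥ normalizedIndicator (U ∩ V) =
      2 * √((U ∩ V).card : ℝ) := by
  rw [normalizedIndicator, dotProduct_smul, add_dotProduct, indicator_one_dotProduct_indicator_one,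
    indicator_one_dotProduct_indicator_one, Finset.inter_eq_right.2 Finset.inter_subset_left,
    Finset.inter_eq_right.2 Finset.inter_subset_right, ← two_mul, smul_eq_mul, mul_left_comm,
    inv_mul_eq_div, Real.div_sqrt]

end NormalizedSum

theorem stmt16_general {ι : Type*} [Fintype ι] [DecidableEq ι] (C₁ C₂ : Finset ι)
    (hV : (C₁ ∩ C₂).Nonempty) (a T : ℝ) (hT : T ≤ 2 * (a * √((C₁ ∩ C₂).card : ℝ))) :
    ∫ y, Real.exp (-(((a * √(C₁.card : ℝ)) ^ 2 + (a * √(C₂.card : ℝ)) ^ 2) / 2) +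
          (a * √(C₁.card : ℝ) * normalizedSum C₁ y + a * √(C₂.card : ℝ) * normalizedSum C₂ y)) *
          (if normalizedSum (C₁ ∩ C₂) y ≤ T then 1 else 0)
        ∂(Measure.pi fun _ : ι => gaussianReal 0 1) ≤
      Real.exp (T ^ 2 / 2 - (T - a * √((C₁ ∩ C₂).card : ℝ)) ^ 2) := by
  set w : ι → ℝ := a • ((C₁ : Set ι).indicator 1 + (C₂ : Set ι).indicator 1) with hw
  have w_dotProduct (y : ι → ℝ) : w ⬝ᵥ y =
      a * √(C₁.card : ℝ) * normalizedSum C₁ y + a * √(C₂.card : ℝ) * normalizedSum C₂ y := by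
    simp only [hw, smul_dotProduct, add_dotProduct, indicator_one_dotProduct, smul_eq_mul,
      mul_assoc, sqrt_card_mul_normalizedSum, mul_add]
  have w_norm_sq : w ⬝ᵥ w = a ^ 2 * (C₁.card + C₂.card + 2 * (C₁ ∩ C₂).card) := by
    rw [hw, smul_dotProduct, dotProduct_smul, indicator_one_add_dotProduct_self, smul_smul,
      smul_eq_mul, pow_two]
  have w_dotProduct_unit :
      w ⬝ᵥ normalizedIndicator (C₁ ∩ C₂) = 2 * (a * √((C₁ ∩ C₂).card : ℝ)) := by
    rw [hw, smul_dotProduct, indicator_one_add_dotProduct_normalizedIndicator_inter, smul_eq_mul,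
      mul_left_comm]
  have truncated_bound := integral_exp_dotProduct_mul_ite_le
    (normalizedIndicator_dotProduct_self hV) (w_dotProduct_unit ▸ hT)
  simp_rw [w_dotProduct_unit, w_norm_sq, w_dotProduct, normalizedIndicator_dotProduct]
    at truncated_bound
  simp_rw [Real.exp_add (-_), mul_assoc (Real.exp (-_)), integral_const_mul]
  refine (mul_le_mul_of_nonneg_left truncated_bound (Real.exp_nonneg _)).trans_eq ?_
  rw [← Real.exp_add]
  congr 1
  simp only [mul_pow, sub_sq, Real.sq_sqrt (Nat.cast_nonneg _)]
  ring

/-- Lemma 1 (3) (truncated exponential moment bound, truncation at the overlap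
sum): if `kl ≥ 1` and `0 < T ≤ 2 z_{kl}`, then
`E_0[exp(−b² + b(Y_{C₁}+Y_{C₂})) 1{Y_V ≤ T}] ≤ exp(T²/2 − (T − z_{kl})²)`. -/
theorem stmt16 (N M n m : ℕ) (hn1 : 1 ≤ n) (hnN : n ≤ N) (hm1 : 1 ≤ m) (hmM : m ≤ M)
    (a : ℝ) (ha : 0 < a)
    (A1 A2 : Finset (Fin N)) (B1 B2 : Finset (Fin M))
    (hA1 : A1.card = n) (hA2 : A2.card = n) (hB1 : B1.card = m) (hB2 : B2.card = m)
    (hkl : 1 ≤ (A1 ∩ A2).card * (B1 ∩ B2).card)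
    (T : ℝ) (hT : 0 < T)
    (hT2 : T ≤ 2 * (a * Real.sqrt (((A1 ∩ A2).card : ℝ) * ((B1 ∩ B2).card : ℝ)))) :
    ∫ y, Real.exp (-(a * Real.sqrt ((n : ℝ) * m)) ^ 2 +
          a * Real.sqrt ((n : ℝ) * m) * (YC N M y A1 B1 + YC N M y A2 B2)) *
          (if YC N M y (A1 ∩ A2) (B1 ∩ B2) ≤ T then 1 else 0)
        ∂(matLaw N M fun _ _ => 0) ≤
      Real.exp (T ^ 2 / 2 -
        (T - a * Real.sqrt (((A1 ∩ A2).card : ℝ) * ((B1 ∩ B2).card : ℝ))) ^ 2) := by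
  have hV : ((A1 ×ˢ B1) ∩ (A2 ×ˢ B2)).Nonempty := by
    rwa [Finset.product_inter_product, ← Finset.card_pos, Finset.card_product]
  simpa only [Finset.product_inter_product, Finset.card_product, Nat.cast_mul, hA1, hA2, hB1, hB2,
    ← YC_eq_normalizedSum, add_self_div_two, ← mul_add, matLaw] using
    stmt16_general (A1 ×ˢ B1) (A2 ×ˢ B2) hV a T (by
      simpa only [Finset.product_inter_product, Finset.card_product, Nat.cast_mul] using hT2)
end
end
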